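/- arXiv:1504.06844 — 5 statements merged into one kernel-verified Lean document; each statement's English description precedes it below -/
import Mathlib

section
/- Let G be a simple graph on the vertex set Fin n and let F be a field. Then the independence number of G is a lower bound, and the chromatic number of the complement graph of G is an upper bound, for the minimum rank over all matrices over F that fit G; that is, α(G) ≤ sInf { rank M : M fits G over F } and sInf { rank M : M fits G over F } ≤ χ(Gᶜ). -/
/-!
Lower bound: if `M` fits `G` and `s` is independent, the principal submatrix of `M` on `s` is the
identity, so `#s ≤ rank M`.

Upper bound: given a proper colouring of `Gᶜ` with `k` colours, let `B` be the vertex-by-colour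
incidence matrix. Then `B * Bᵀ` has entry `1` exactly when two vertices have the same colour, so it
fits `G` (two distinct vertices of the same colour are adjacent in `G`), and its rank is at most the
number `k` of columns of `B`.
-/

open Matrix

/-- A matrix `M` over a field `F` fits the simple graph `G` if all diagonal entries are `1`
and `M i j = 0` whenever `i ≠ j` and `i, j` are not adjacent in `G`. -/
def Fits {n : ℕ} (F : Type*) [Field F] (G : SimpleGraph (Fin n))
    (M : Matrix (Fin n) (Fin n) F) : Prop :=
  (∀ i, M i i = 1) ∧ ∀ i j, i ≠ j → ¬ G.Adj i j → M i j = 0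

/-- A principal submatrix on an independent set is an identity matrix. -/
lemma Fits.card_le_rank {n : ℕ} {F : Type*} [Field F] {G : SimpleGraph (Fin n)}
    {M : Matrix (Fin n) (Fin n) F} (hM : Fits F G M) (s : Finset (Fin n))
    (hs : ∀ i ∈ s, ∀ j ∈ s, i ≠ j → ¬ G.Adj i j) : s.card ≤ M.rank := by
  have h : M.submatrix (fun i : s => (i : Fin n)) (fun i : s => (i : Fin n)) = 1 := by
    ext i j
    by_cases hij : i = j
    · subst hij
      simp [hM.1]
    · have hne : (i : Fin n) ≠ j := fun h => hij (Subtype.ext h)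
      simp [hij, hM.2 i j hne (hs i i.2 j j.2 hne)]
  calc s.card = (1 : Matrix s s F).rank := by simp [Matrix.rank_one]
    _ ≤ M.rank := h ▸ M.rank_submatrix_le _ _

/-- The witness is `B * Bᵀ`, where `B` is the vertex-by-colour incidence matrix. -/
lemma exists_fits_rank_le_of_colorable_compl {n : ℕ} (F : Type*) [Field F]
    {G : SimpleGraph (Fin n)} {k : ℕ} (hk : Gᶜ.Colorable k) :
    ∃ M : Matrix (Fin n) (Fin n) F, Fits F G M ∧ M.rank ≤ k := by
  obtain ⟨C⟩ := hk
  let B : Matrix (Fin n) (Fin k) F := Matrix.of fun i c => if C i = c then 1 else 0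
  refine ⟨B * Bᵀ, ⟨fun i => by simp [B, Matrix.mul_apply], fun i j hij hadj => ?_⟩,
    (Matrix.rank_mul_le_left _ _).trans (Matrix.rank_le_width _)⟩
  have hC : C i ≠ C j := C.valid ((SimpleGraph.compl_adj G i j).2 ⟨hij, hadj⟩)
  simp [B, Matrix.mul_apply, hC]

/-- The independence number of `G` is a lower bound, and the chromatic number of the
complement of `G` is an upper bound, for the minimum rank over all matrices over `F`
fitting `G`. -/
theorem indepNum_le_minRank_and_minRank_le_chromaticNumber_compl
    {n : ℕ} (F : Type*) [Field F] (G : SimpleGraph (Fin n)) :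
    sSup {k : ℕ | ∃ s : Finset (Fin n),
        (∀ i ∈ s, ∀ j ∈ s, i ≠ j → ¬ G.Adj i j) ∧ s.card = k} ≤
      sInf {r : ℕ | ∃ M : Matrix (Fin n) (Fin n) F, Fits F G M ∧ M.rank = r} ∧
    ((↑(sInf {r : ℕ | ∃ M : Matrix (Fin n) (Fin n) F, Fits F G M ∧ M.rank = r}) : ℕ∞) ≤
      Gᶜ.chromaticNumber) := by
  constructor
  · have hne : {r : ℕ | ∃ M : Matrix (Fin n) (Fin n) F, Fits F G M ∧ M.rank = r}.Nonempty :=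
      ⟨_, 1, ⟨fun i => Matrix.one_apply_eq i, fun i j hij _ => Matrix.one_apply_ne hij⟩, rfl⟩
    obtain ⟨M, hM, hr⟩ := Nat.sInf_mem hne
    rw [← hr]
    refine csSup_le ⟨0, ∅, by simp, rfl⟩ ?_
    rintro _ ⟨s, hs, rfl⟩
    exact hM.card_le_rank s hs
  · refine le_iInf₂ fun k hk => ?_
    obtain ⟨M, hM, hr⟩ := exists_fits_rank_le_of_colorable_compl F (G := G) hk
    have h : sInf {r : ℕ | ∃ M : Matrix (Fin n) (Fin n) F, Fits F G M ∧ M.rank = r} ≤ M.rank :=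
      Nat.sInf_le ⟨M, hM, rfl⟩
    exact Nat.cast_le.2 (h.trans hr)
end

section
/- Let G be a simple graph on the vertex set Fin n, let F be a field, and let M be a matrix over F that fits G. Then for every finite set S of vertices that is independent in G (i.e., no two distinct elements of S are adjacent in G), the rank of M is at least the cardinality of S. -/
open Matrix

/-- If `M` fits `G`, then the rank of `M` is at least the cardinality of any
independent set of vertices of `G`. -/
theorem card_indepSet_le_rank_of_fits
    {n : ℕ} {F : Type*} [Field F] {G : SimpleGraph (Fin n)}
    {M : Matrix (Fin n) (Fin n) F} (hM : Fits F G M)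
    (S : Finset (Fin n)) (hS : ∀ i ∈ S, ∀ j ∈ S, i ≠ j → ¬ G.Adj i j) :
    S.card ≤ M.rank := by
  -- Restricted to the rows and columns in `S`, the matrix is the identity, of rank `S.card`.
  have h : M.submatrix ((↑) : S → Fin n) ((↑) : S → Fin n) = 1 := by
    ext i j
    rcases eq_or_ne i j with rfl | hij
    · simpa using hM.1 i
    · have hij' : (i : Fin n) ≠ j := fun e => hij (Subtype.ext e)
      simpa [Matrix.one_apply_ne hij] using
        hM.2 i j hij' (hS i i.2 j j.2 hij')
  have hr := rank_submatrix_le M ((↑) : S → Fin n) ((↑) : S → Fin n)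
  rwa [h, rank_one, Fintype.card_coe] at hr
end

section
/- Let G be a simple graph on the vertex set Fin n, let F be a field, and suppose the complement graph Gᶜ admits a proper coloring with colors in Fin k. Then there exists a matrix M over F that fits G with rank M ≤ k. -/
open Matrix

/-- If the complement graph `Gᶜ` admits a proper coloring with colors in `Fin k`, then there
is a matrix over `F` fitting `G` whose rank is at most `k`. -/
theorem exists_fits_rank_le_of_coloring_compl
    {n k : ℕ} (F : Type*) [Field F] (G : SimpleGraph (Fin n))
    (c : Gᶜ.Coloring (Fin k)) :
    ∃ M : Matrix (Fin n) (Fin n) F, Fits F G M ∧ M.rank ≤ k := by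
  -- `A` is the vertex–color incidence matrix, so `(A * Aᵀ) i j` is `1` if `c i = c j` and `0`
  -- otherwise; as `A` has `k` columns, this product has rank at most `k`.
  let A : Matrix (Fin n) (Fin k) F := Matrix.of fun i a => if c i = a then 1 else 0
  refine ⟨A * Aᵀ, ⟨fun i => ?_, fun i j hij hG => ?_⟩,
    (rank_mul_le_left A Aᵀ).trans A.rank_le_width⟩
  · simp [A, Matrix.mul_apply]
  · have hc : c i ≠ c j := c.valid ((SimpleGraph.compl_adj G i j).2 ⟨hij, hG⟩)
    simp [A, Matrix.mul_apply, hc]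
end

section
/- Let Φ be the real n×n pattern matrix of a loopless directed graph G_d on Fin n (Φ i j = 1 if (i,j) is an edge of G_d and Φ i j = 0 otherwise, with Φ i i = 0). Let M* be a real n×n matrix, let A be a real r×n matrix such that A·Aᵀ is invertible and M* · Aᵀ · (A·Aᵀ)⁻¹ · A = M*, and let M_D := 1 + M* ∘ Φ. Assume ‖M_D − M*‖ ≤ ε, where ‖·‖ is the ℓ²→ℓ² operator norm. Let X : Fin n → ℝ satisfy |X i| ≤ X_max for all i, where X_max ≥ 0, and define the decoded vector X̂ := (M* · Aᵀ · (A·Aᵀ)⁻¹ · A).mulVec X − (M* ∘ Φ).mulVec X. Then the Euclidean norm of the aggregate decoding error satisfies ‖X − X̂‖ ≤ ε · X_max · √n. -/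
/-!
Since `M * Aᵀ * (A * Aᵀ)⁻¹ * A = M`, the decoding error is exactly `(M_D - M) X`, where
`M_D = 1 + M ⊙ Φ`. The operator norm inequality bounds it by `ε * ‖X‖`, and the entrywise bound
on `X` gives `‖X‖ ≤ Xmax * √n`.
-/

open Matrix

/-- The ℓ²→ℓ² operator norm of a real square matrix. -/
noncomputable def opNorm {n : ℕ} (X : Matrix (Fin n) (Fin n) ℝ) : ℝ :=
  ‖LinearMap.toContinuousLinearMap (Matrix.toEuclideanLin X)‖

/-- Decoding error bound for the index coding scheme: if the ℓ²→ℓ² operator norm of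
`M_D - M*` is at most `ε`, where `M_D = 1 + M* ⊙ Φ`, and every message satisfies
`|X i| ≤ X_max`, then the Euclidean norm of the aggregate decoding error is at most
`ε * X_max * √n`. -/
theorem decode_error_le
    {n r : ℕ} (E : Fin n → Fin n → Prop) [DecidableRel E] (hE : ∀ i, ¬ E i i)
    (Φ : Matrix (Fin n) (Fin n) ℝ) (hΦ : ∀ i j, Φ i j = if E i j then 1 else 0)
    (M : Matrix (Fin n) (Fin n) ℝ) (A : Matrix (Fin r) (Fin n) ℝ)
    (hA : IsUnit (A * Aᵀ))
    (hM : M * Aᵀ * (A * Aᵀ)⁻¹ * A = M)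
    (ε : ℝ) (hε : opNorm ((1 + M ⊙ Φ) - M) ≤ ε)
    (Xmax : ℝ) (hXmax : 0 ≤ Xmax)
    (X : Fin n → ℝ) (hX : ∀ i, |X i| ≤ Xmax)
    (Xhat : Fin n → ℝ)
    (hXhat : Xhat = (M * Aᵀ * (A * Aᵀ)⁻¹ * A).mulVec X - (M ⊙ Φ).mulVec X) :
    ‖(WithLp.equiv 2 (Fin n → ℝ)).symm (X - Xhat)‖ ≤ ε * Xmax * Real.sqrt n := by
  have herr : X - Xhat = ((1 + M ⊙ Φ) - M).mulVec X := by
    rw [hXhat, hM, Matrix.sub_mulVec, Matrix.add_mulVec, Matrix.one_mulVec]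
    abel
  have hXnorm : ‖(WithLp.toLp 2 X : EuclideanSpace ℝ (Fin n))‖ ≤ Xmax * Real.sqrt n := by
    rw [EuclideanSpace.norm_eq]
    apply Real.sqrt_le_iff.mpr
    refine ⟨by positivity, ?_⟩
    calc ∑ i, ‖(WithLp.toLp 2 X : EuclideanSpace ℝ (Fin n)) i‖ ^ 2
        ≤ ∑ _i : Fin n, Xmax ^ 2 :=
          Finset.sum_le_sum fun i _ => pow_le_pow_left₀ (norm_nonneg _) (hX i) 2
      _ = (Xmax * Real.sqrt n) ^ 2 := by
          rw [mul_pow, Real.sq_sqrt (Nat.cast_nonneg n)]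
          simp [mul_comm]
  have hε0 : 0 ≤ ε := (norm_nonneg _).trans hε
  have hop := (LinearMap.toContinuousLinearMap
    (Matrix.toEuclideanLin ((1 + M ⊙ Φ) - M))).le_opNorm (WithLp.toLp 2 X)
  rw [LinearMap.coe_toContinuousLinearMap', Matrix.toLpLin_toLp] at hop
  rw [herr, mul_assoc, WithLp.equiv_symm_apply]
  exact hop.trans (mul_le_mul hε hXnorm (norm_nonneg _) hε0)
end

section
/- Let C and D be nonempty closed convex subsets of the Euclidean space ℝⁿ with C ∩ D nonempty. Let a : ℕ → ℝⁿ and b : ℕ → ℝⁿ be sequences such that for every k, the point b k belongs to D and is a nearest point of D to a k (i.e., dist (a k) (b k) ≤ dist (a k) y for all y ∈ D), and the point a (k+1) belongs to C and is a nearest point of C to b k (i.e., dist (b k) (a (k+1)) ≤ dist (b k) y for all y ∈ C). Then there exists a point z ∈ C ∩ D such that the sequence a converges to z (and hence b converges to z as well). -/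
/-!
Projecting onto a convex set `K` makes an obtuse angle with every `y ∈ K`, so it decreases the
squared distance to `y` by at least the squared length of the step
(`sq_dist_nearest_add_sq_dist_le`). Hence the distance from `a k` to any point of `C ∩ D` is
nonincreasing (Fejér monotonicity), and since the squared distances converge, the steps
`dist (a k) (b k)` and `dist (b k) (a (k + 1))` tend to `0`. The sequence `a` is bounded, so it has
a cluster point `z` by compactness; the vanishing steps put `z` in both closed sets. As
`z ∈ C ∩ D`, the distances `dist (a k) z` are nonincreasing and tend to `0` along a subsequence,
hence along the whole sequence.
-/

open Filter Topology

/-- Pythagorean inequality for a nearest point `p` of a convex set to `x`. -/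
theorem sq_dist_nearest_add_sq_dist_le {E : Type*} [NormedAddCommGroup E] [InnerProductSpace ℝ E]
    {K : Set E} (hK : Convex ℝ K) {x p y : E} (hp : p ∈ K)
    (hmin : ∀ w ∈ K, dist x p ≤ dist x w) (hy : y ∈ K) :
    dist p y ^ 2 + dist x p ^ 2 ≤ dist x y ^ 2 := by
  have : Nonempty K := ⟨⟨p, hp⟩⟩
  have heq : ‖x - p‖ = ⨅ w : K, ‖x - w‖ := by
    refine le_antisymm (le_ciInf fun w => ?_) ?_
    · simpa [dist_eq_norm] using hmin w w.2
    · exact ciInf_le (f := fun w : K => ‖x - w‖)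
        ⟨0, by rintro _ ⟨w, rfl⟩; exact norm_nonneg _⟩ ⟨p, hp⟩
  have hin := (norm_eq_iInf_iff_real_inner_le_zero hK hp).1 heq y hy
  have hsq := norm_sub_sq_real (x - p) (y - p)
  rw [sub_sub_sub_cancel_right] at hsq
  rw [dist_comm p y, dist_eq_norm, dist_eq_norm, dist_eq_norm]
  linarith

/-- Convergence of the alternating projections method between two nonempty closed convex
subsets of Euclidean space with nonempty intersection: if `b k` is a nearest point of `D`
to `a k` and `a (k+1)` is a nearest point of `C` to `b k`, then the sequence `a` converges
to some point of `C ∩ D` (and hence so does `b`). -/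
theorem alternatingProjections_tendsto
    {n : ℕ} (C D : Set (EuclideanSpace ℝ (Fin n)))
    (hCne : C.Nonempty) (hDne : D.Nonempty)
    (hCclosed : IsClosed C) (hDclosed : IsClosed D)
    (hCconv : Convex ℝ C) (hDconv : Convex ℝ D)
    (hCD : (C ∩ D).Nonempty)
    (a b : ℕ → EuclideanSpace ℝ (Fin n))
    (hb : ∀ k, b k ∈ D ∧ ∀ y ∈ D, dist (a k) (b k) ≤ dist (a k) y)
    (ha : ∀ k, a (k + 1) ∈ C ∧ ∀ y ∈ C, dist (b k) (a (k + 1)) ≤ dist (b k) y) :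
    ∃ z ∈ C ∩ D, Filter.Tendsto a Filter.atTop (nhds z) ∧
      Filter.Tendsto b Filter.atTop (nhds z) := by
  have step : ∀ w ∈ C ∩ D, ∀ k, dist (a k) (b k) ^ 2 + dist (b k) (a (k + 1)) ^ 2 ≤
      dist (a k) w ^ 2 - dist (a (k + 1)) w ^ 2 := fun w hw k => by
    have h₁ := sq_dist_nearest_add_sq_dist_le hDconv (hb k).1 (hb k).2 hw.2
    have h₂ := sq_dist_nearest_add_sq_dist_le hCconv (ha k).1 (ha k).2 hw.1
    linarith
  have anti : ∀ w ∈ C ∩ D, Antitone fun k => dist (a k) w := fun w hw =>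
    antitone_nat_of_succ_le fun k => by
      refine (sq_le_sq₀ dist_nonneg dist_nonneg).1 ?_
      linarith [step w hw k, sq_nonneg (dist (a k) (b k)), sq_nonneg (dist (b k) (a (k + 1)))]
  obtain ⟨w, hw⟩ := hCD
  have hdiff : Tendsto (fun k => dist (a k) w ^ 2 - dist (a (k + 1)) w ^ 2) atTop (𝓝 0) := by
    have hlim := (tendsto_atTop_ciInf (anti w hw)
      ⟨0, by rintro _ ⟨k, rfl⟩; exact dist_nonneg⟩).pow 2
    simpa using hlim.sub (hlim.comp (tendsto_add_atTop_nat 1))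
  have hab : Tendsto (fun k => dist (a k) (b k)) atTop (𝓝 0) := by
    have : Tendsto (fun k => dist (a k) (b k) ^ 2) atTop (𝓝 0) :=
      squeeze_zero (fun k => sq_nonneg _)
        (fun k => by linarith [step w hw k, sq_nonneg (dist (b k) (a (k + 1)))]) hdiff
    simpa [Real.sqrt_sq dist_nonneg] using this.sqrt
  have hba : Tendsto (fun k => dist (b k) (a (k + 1))) atTop (𝓝 0) := by
    have : Tendsto (fun k => dist (b k) (a (k + 1)) ^ 2) atTop (𝓝 0) :=
      squeeze_zero (fun k => sq_nonneg _)
        (fun k => by linarith [step w hw k, sq_nonneg (dist (a k) (b k))]) hdiff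
    simpa [Real.sqrt_sq dist_nonneg] using this.sqrt
  obtain ⟨z, -, φ, hφ, hz⟩ := (isCompact_closedBall w (dist (a 0) w)).tendsto_subseq
    (x := a) fun k => anti w hw (Nat.zero_le k)
  have hbz : Tendsto (b ∘ φ) atTop (𝓝 z) :=
    hz.congr_dist (hab.comp hφ.tendsto_atTop)
  have haz : Tendsto (fun k => a (φ k + 1)) atTop (𝓝 z) :=
    hbz.congr_dist (hba.comp hφ.tendsto_atTop)
  have hzCD : z ∈ C ∩ D :=
    ⟨hCclosed.mem_of_tendsto haz (Eventually.of_forall fun k => (ha _).1),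
      hDclosed.mem_of_tendsto hbz (Eventually.of_forall fun k => (hb _).1)⟩
  have hlim : Tendsto a atTop (𝓝 z) :=
    tendsto_iff_dist_tendsto_zero.2 <|
      (tendsto_iff_tendsto_subseq_of_antitone (anti z hzCD) hφ.tendsto_atTop).2
        (tendsto_iff_dist_tendsto_zero.1 hz)
  exact ⟨z, hzCD, hlim, hlim.congr_dist hab⟩
end
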